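/- There exists a constant c ∈ ℕ such that for every 2-VASS V = (Q,T) and every D ∈ ℕ, writing L = ([0,D]×ℕ) ∪ (ℕ×[0,D]) ⊆ ℕ², there exists a finite set Y_L of linear path schemes over V such that: (i) for all states p,q ∈ Q and all u,v ∈ L, if p(u) →*_L q(v) then p(u) →^{Y_L}_{ℕ²} q(v); (ii) every ρ ∈ Y_L has length at most (|Q| + ‖T‖ + D + 2)^c; and (iii) every ρ ∈ Y_L has at most two cycles. -/

import Mathlib

namespace VASS

/-- Integer vectors of dimension `d`. -/
abbrev Vec (d : ℕ) := Fin d → ℤ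

/-- A transition of a `d`-VASS: source state, update vector, target state. -/
abbrev Trans (d : ℕ) := ℕ × Vec d × ℕ

/-- The norm of a vector: maximum of absolute values of its components. -/
def vnorm {d : ℕ} (z : Vec d) : ℕ := Finset.univ.sup fun i => (z i).natAbs

/-- The norm of a transition set. -/
def tnorm {d : ℕ} (T : Finset (Trans d)) : ℕ := T.sup fun t => vnorm t.2.1

/-- The displacement of a word of transitions. -/
def disp {d : ℕ} (π : List (Trans d)) : Vec d := (π.map fun t => t.2.1).sum

/-- `IsPathFrom p q π` : `π` is a path from `p` to `q`. -/
def IsPathFrom {d : ℕ} : ℕ → ℕ → List (Trans d) → Prop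
  | p, q, [] => p = q
  | p, q, t :: rest => t.1 = p ∧ IsPathFrom t.2.2 q rest

/-- ℕ^d as a subset of ℤ^d. -/
def NatSet (d : ℕ) : Set (Vec d) := {v | ∀ i, 0 ≤ v i}

/-- `p(u) →^π_A q(v)`. -/
def Run {d : ℕ} (T : Finset (Trans d)) (A : Set (Vec d)) (p : ℕ) (u : Vec d)
    (q : ℕ) (v : Vec d) (π : List (Trans d)) : Prop :=
  (∀ t ∈ π, t ∈ T) ∧ IsPathFrom p q π ∧ u ∈ A ∧ v = u + disp π ∧
    ∀ i, 1 ≤ i → i ≤ π.length → u + disp (π.take i) ∈ A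

/-- `p(u) →*_A q(v)`. -/
def Reach {d : ℕ} (T : Finset (Trans d)) (A : Set (Vec d)) (p : ℕ) (u : Vec d)
    (q : ℕ) (v : Vec d) : Prop := ∃ π, Run T A p u q v π

/-- A linear path scheme `α₀ β₁* α₁ ⋯ β_k* α_k`, presented as the initial
segment `α₀` together with the list of pairs `(βᵢ, αᵢ)`. -/
abbrev LPS (d : ℕ) := List (Trans d) × List (List (Trans d) × List (Trans d))

/-- The underlying word `α₀ β₁ α₁ ⋯ β_k α_k` of a linear path scheme. -/
def lpsSupport {d : ℕ} (ρ : LPS d) : List (Trans d) :=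
  ρ.1 ++ (ρ.2.map fun s => s.1 ++ s.2).flatten

/-- The length of a linear path scheme. -/
def lpsLen {d : ℕ} (ρ : LPS d) : ℕ := (lpsSupport ρ).length

/-- The number of cycles of a linear path scheme. -/
def numCycles {d : ℕ} (ρ : LPS d) : ℕ := ρ.2.length

/-- `ρ` is a linear path scheme from `p` to `q` over the transition set `T`:
its underlying word uses transitions from `T` and is a path from `p` to `q`,
and each `βᵢ` is a cycle. -/
def IsLPSFrom {d : ℕ} (T : Finset (Trans d)) (p q : ℕ) (ρ : LPS d) : Prop :=
  (∀ t ∈ lpsSupport ρ, t ∈ T) ∧ IsPathFrom p q (lpsSupport ρ) ∧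
    ∀ s ∈ ρ.2, s.1 ≠ [] ∧ ∃ r, IsPathFrom r r s.1

/-- The word `α₀ β₁^{e₁} α₁ ⋯ β_k^{e_k} α_k` of a linear path scheme. -/
def lpsWord {d : ℕ} (ρ : LPS d) (e : List ℕ) : List (Trans d) :=
  ρ.1 ++ (List.zipWith (fun s n => (List.replicate n s.1).flatten ++ s.2) ρ.2 e).flatten

/-- Membership in the language of a linear path scheme. -/
def InLang {d : ℕ} (ρ : LPS d) (π : List (Trans d)) : Prop :=
  ∃ e : List ℕ, e.length = numCycles ρ ∧ π = lpsWord ρ e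

/-- `p(u) →^S_A q(v)` for a finite set `S` of linear path schemes. -/
def SReach {d : ℕ} (T : Finset (Trans d)) (S : Finset (LPS d)) (A : Set (Vec d))
    (p : ℕ) (u : Vec d) (q : ℕ) (v : Vec d) : Prop :=
  ∃ ρ ∈ S, ∃ π, InLang ρ π ∧ Run T A p u q v π

/-- δ(ρ): the set of displacements of words in the language of `ρ`. -/
def DispSet {d : ℕ} (ρ : LPS d) : Set (Vec d) := {z | ∃ π, InLang ρ π ∧ z = disp π}

/-- A quadrant of ℤ². -/
def IsQuadrant (Z : Set (Vec 2)) : Prop :=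
  ∃ ε : Fin 2 → Bool, Z = {v | ∀ i, if ε i then 0 ≤ v i else v i ≤ 0}

/-- A linear path scheme is zigzag-free if the displacements of all its cycles
lie in a single quadrant. -/
def ZigzagFree (ρ : LPS 2) : Prop :=
  ∃ Z, IsQuadrant Z ∧ ∀ s ∈ ρ.2, disp s.1 ∈ Z

/-- The L-shaped band `L = ([0,D]×ℕ) ∪ (ℕ×[0,D])` as a subset of ℤ². -/
def LBand (D : ℕ) : Set (Vec 2) :=
  {v | (∀ i, 0 ≤ v i) ∧ (v 0 ≤ (D : ℤ) ∨ v 1 ≤ (D : ℤ))}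

/-! Generic labelled paths -/

def Pth {V E : Type} (st : V → E → V → Prop) (S : Set V) : V → List E → V → Prop
  | a, [], b => a = b ∧ a ∈ S
  | a, e :: l, b => a ∈ S ∧ ∃ c, st a e c ∧ Pth st S c l b

section generic
variable {V E : Type} {st : V → E → V → Prop} {S : Set V}

theorem Pth.left {a b : V} {l : List E} (h : Pth st S a l b) : a ∈ S := by
  cases l with
  | nil => exact h.2
  | cons e l => exact h.1

theorem Pth.right {a b : V} {l : List E} (h : Pth st S a l b) : b ∈ S := by
  induction l generalizing a with
  | nil => exact h.1 ▸ h.2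
  | cons e l ih => obtain ⟨_, c, _, h2⟩ := h; exact ih h2

theorem Pth.append {a b c : V} {l l' : List E} (h : Pth st S a l b) (h' : Pth st S b l' c) :
    Pth st S a (l ++ l') c := by
  induction l generalizing a with
  | nil => obtain ⟨rfl, _⟩ := h; exact h'
  | cons e l ih => obtain ⟨h0, d, h1, h2⟩ := h; exact ⟨h0, d, h1, ih h2⟩

theorem Pth.split {a c : V} {l l' : List E} (h : Pth st S a (l ++ l') c) :
    ∃ b, Pth st S a l b ∧ Pth st S b l' c := by
  induction l generalizing a with
  | nil => exact ⟨a, ⟨rfl, h.left⟩, h⟩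
  | cons e l ih =>
    obtain ⟨h0, d, h1, h2⟩ := h
    obtain ⟨b, h3, h4⟩ := ih h2
    exact ⟨b, ⟨h0, d, h1, h3⟩, h4⟩

theorem Pth.map {V' E' : Type} {st' : V' → E' → V' → Prop} {S' : Set V'} (f : V → V') (g : E → E')
    (hS : ∀ x ∈ S, f x ∈ S') (hst : ∀ x e y, x ∈ S → y ∈ S → st x e y → st' (f x) (g e) (f y))
    {a b : V} {l : List E} (h : Pth st S a l b) : Pth st' S' (f a) (l.map g) (f b) := by
  induction l generalizing a with
  | nil => exact ⟨congrArg f h.1, hS _ h.2⟩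
  | cons e l ih =>
    obtain ⟨h0, d, h1, h2⟩ := h
    exact ⟨hS _ h0, f d, hst _ _ _ h0 h2.left h1, ih h2⟩

theorem Pth.map' {V' : Type} {st' : V' → E → V' → Prop} {S' : Set V'} (f : V → V')
    (hS : ∀ x ∈ S, f x ∈ S') (hst : ∀ x e y, x ∈ S → y ∈ S → st x e y → st' (f x) e (f y))
    {a b : V} {l : List E} (h : Pth st S a l b) : Pth st' S' (f a) l (f b) := by
  simpa using h.map f id hS hst

theorem Pth.mono {S' : Set V} (hS : S ⊆ S') {a b : V} {l : List E} (h : Pth st S a l b) :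
    Pth st S' a l b := h.map' id (fun _ hx => hS hx) (fun _ _ _ _ _ h => h)

theorem Pth.single {a b : V} {e : E} (ha : a ∈ S) (hb : b ∈ S) (h : st a e b) :
    Pth st S a [e] b := ⟨ha, b, h, rfl, hb⟩

theorem Pth.reverse {a b : V} {l : List E} (h : Pth st S a l b) :
    Pth (fun x e y => st y e x) S b l.reverse a := by
  induction l generalizing a with
  | nil => exact ⟨h.1.symm, h.1 ▸ h.2⟩
  | cons e l ih =>
    obtain ⟨h0, d, h1, h2⟩ := h
    rw [List.reverse_cons]
    exact (ih h2).append (Pth.single h2.left h0 h1)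

theorem Pth.avoid (x : V) {a b : V} {l : List E} (h : Pth st S a l b) :
    Pth st (S \ {x}) a l b ∨ ∃ l1 l2, l = l1 ++ l2 ∧ Pth st S a l1 x ∧ Pth st S x l2 b := by
  by_cases hax : a = x
  · subst hax
    exact Or.inr ⟨[], l, rfl, ⟨rfl, h.left⟩, h⟩
  induction l generalizing a with
  | nil => exact Or.inl ⟨h.1, h.2, hax⟩
  | cons e l ih =>
    obtain ⟨h0, d, h1, h2⟩ := h
    by_cases hd : d = x
    · subst hd
      exact Or.inr ⟨[e], l, rfl, ⟨h0, d, h1, rfl, h2.left⟩, h2⟩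
    rcases ih h2 hd with h3 | ⟨l1, l2, rfl, h3, h4⟩
    · exact Or.inl ⟨⟨h0, hax⟩, d, h1, h3⟩
    · exact Or.inr ⟨e :: l1, l2, rfl, ⟨h0, d, h1, h3⟩, h4⟩

theorem Pth.cyc (n : ℕ) : ∀ (F : Finset V) (S : Set V), F.card = n → S ⊆ ↑F →
    ∀ {a b : V} {l : List E}, Pth st S a l b →
    l.length < n ∨ ∃ A B C z, l = A ++ B ++ C ∧ B ≠ [] ∧ Pth st S a A z ∧ Pth st S z B z ∧
      Pth st S z C b := by
  classical
  induction n with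
  | zero =>
    intro F S hF hS a b l h
    have := hS h.left
    rw [Finset.card_eq_zero] at hF
    subst hF
    simp at this
  | succ n ih =>
    intro F S hF hS a b l h
    cases l with
    | nil => left; simp
    | cons e l =>
      obtain ⟨h0, d, h1, h2⟩ := h
      rcases h2.avoid a with h3 | ⟨l1, l2, rfl, h3, h4⟩
      · have ha : a ∈ F := hS h0
        rcases ih (F.erase a) (S \ {a}) (by rw [Finset.card_erase_of_mem ha, hF]; rfl)
          (by intro y hy; simp only [Finset.coe_erase]; exact ⟨hS hy.1, hy.2⟩) h3 with
          h5 | ⟨A, B, C, z, rfl, hB, h5, h6, h7⟩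
        · left; simp; omega
        · right
          have hm : S \ {a} ⊆ S := Set.sdiff_subset
          exact ⟨e :: A, B, C, z, by simp, hB, ⟨h0, d, h1, h5.mono hm⟩, h6.mono hm, h7.mono hm⟩
      · right
        exact ⟨[], e :: l1, l2, a, by simp, by simp, ⟨rfl, h0⟩, ⟨h0, d, h1, h3⟩, h4⟩

theorem Pth.shorten (F : Finset V) (hS : S ⊆ ↑F) {a b : V} {l : List E} (h : Pth st S a l b) :
    ∃ l', l'.Sublist l ∧ Pth st S a l' b ∧ l'.length < F.card := by
  induction hn : l.length using Nat.strong_induction_on generalizing l with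
  | _ n ih =>
    rcases Pth.cyc _ F S rfl hS h with h1 | ⟨A, B, C, z, rfl, hB, h5, h6, h7⟩
    · exact ⟨l, List.Sublist.refl _, h, h1⟩
    · have hBl : 0 < B.length := List.length_pos_iff.mpr hB
      obtain ⟨l', h8, h9, h10⟩ := ih (A ++ C).length (by rw [← hn]; simp; omega)
        (h5.append h7) rfl
      refine ⟨l', h8.trans ?_, h9, h10⟩
      rw [List.append_assoc]
      exact List.Sublist.append (List.Sublist.refl _) (List.sublist_append_right _ _)

end generic

/-! Weighted graphs with positive weights -/

def wt {E : Type} (w : E → ℕ) (l : List E) : ℕ := (l.map w).sum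

section weighted
variable {V E : Type} {st : V → E → V → Prop} {S : Set V} {w : E → ℕ}

@[simp] theorem wt_nil : wt w ([] : List E) = 0 := rfl
@[simp] theorem wt_cons (e : E) (l : List E) : wt w (e :: l) = w e + wt w l := by simp [wt]
@[simp] theorem wt_append (l l' : List E) : wt w (l ++ l') = wt w l + wt w l' := by simp [wt]

theorem wt_sublist {l l' : List E} (h : l'.Sublist l) : wt w l' ≤ wt w l := by
  induction h with
  | slnil => simp
  | cons a _ ih => simp; omega
  | cons_cons a _ ih => simp; omega

theorem Pth.modshort (F : Finset V) (d : ℕ) (hd : 0 < d) (hS : S ⊆ ↑F) {a b : V} {l : List E}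
    (h : Pth st S a l b) :
    ∃ l' k, Pth st S a l' b ∧ l'.length < F.card * d ∧ wt w l = wt w l' + k * d := by
  have key : ∀ (l : List E) (a : V) (r : ℕ), r < d → Pth st S a l b →
      Pth (fun (x : V × ℕ) e y => st x.1 e y.1 ∧ y.2 = (x.2 + w e) % d)
        {x | x.1 ∈ S ∧ x.2 < d} (a, r) l (b, (r + wt w l) % d) := by
    intro l
    induction l with
    | nil =>
      intro a r hr h
      refine ⟨?_, h.2, hr⟩
      simp [h.1, Nat.mod_eq_of_lt hr]
    | cons e l ih =>
      intro a r hr h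
      obtain ⟨h0, c, h1, h2⟩ := h
      refine ⟨⟨h0, hr⟩, (c, (r + w e) % d), ⟨h1, rfl⟩, ?_⟩
      have := ih c ((r + w e) % d) (Nat.mod_lt _ hd) h2
      convert this using 2
      rw [wt_cons, Nat.mod_add_mod, Nat.add_assoc]
  have key2 : ∀ (l : List E) (x y : V × ℕ), x.2 < d →
      Pth (fun (x : V × ℕ) e y => st x.1 e y.1 ∧ y.2 = (x.2 + w e) % d)
        {x | x.1 ∈ S ∧ x.2 < d} x l y → y.2 = (x.2 + wt w l) % d := by
    intro l
    induction l with
    | nil =>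
      intro x y hr h
      rw [← h.1]; simp [Nat.mod_eq_of_lt hr]
    | cons e l ih =>
      intro x y hr h
      obtain ⟨h0, c, ⟨h1, h3⟩, h2⟩ := h
      rw [ih c y h2.left.2 h2, h3, wt_cons, Nat.mod_add_mod, Nat.add_assoc]
  have h1 := key l a 0 hd h
  obtain ⟨l', h2, h3, h4⟩ := h1.shorten (F ×ˢ Finset.range d) (by
    intro x hx
    simp only [Finset.coe_product, Set.mem_prod, Finset.mem_coe, Finset.mem_range]
    exact ⟨hS hx.1, hx.2⟩)
  have h5 := key2 _ _ _ hd h3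
  simp only [Nat.zero_add] at h5
  have h6 := wt_sublist (w := w) h2
  have h7 : (wt w l' ≡ wt w l [MOD d]) := h5.symm
  obtain ⟨k, hk⟩ := (Nat.modEq_iff_dvd' h6).mp h7
  refine ⟨l', k, h3.map' Prod.fst (fun x hx => hx.1) (fun _ _ _ _ _ h => h.1), ?_, ?_⟩
  · simpa using h4
  · rw [mul_comm k]; omega

/-- Chrobak style normal form. -/
theorem Pth.chrobak (F : Finset V) (M : ℕ) (hS : S ⊆ ↑F) (hw : ∀ x e y, st x e y → 1 ≤ w e ∧ w e ≤ M)
    {a b : V} {l : List E} (h : Pth st S a l b) :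
    ∃ z L1 L2 L3 e, Pth st S a L1 z ∧ Pth st S z L2 z ∧ Pth st S z L3 b ∧
      L1.length ≤ F.card * (F.card * M + M + 1) ∧ L2.length ≤ F.card + 1 ∧
      L3.length ≤ F.card * (F.card * M + M + 1) ∧ wt w l = wt w L1 + e * wt w L2 + wt w L3 := by
  rcases Pth.cyc _ F S rfl hS h with h1 | ⟨A, B, C, z, rfl, hB, h5, h6, h7⟩
  · refine ⟨a, [], [], l, 0, ⟨rfl, h.left⟩, ⟨rfl, h.left⟩, h, by simp, by simp, ?_, by simp⟩
    have := Nat.mul_le_mul_left F.card (Nat.le_add_left 1 (F.card * M + M))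
    omega
  · cases B with
    | nil => exact absurd rfl hB
    | cons e B =>
      have h6' := h6
      obtain ⟨h0, c, h8, h9⟩ := h6
      obtain ⟨B', -, h11, h12⟩ := h9.shorten F hS
      have hwB : ∀ (l : List E) (x y : V), Pth st S x l y → wt w l ≤ l.length * M := by
        intro l
        induction l with
        | nil => intros; simp
        | cons e l ih =>
          intro x y hh
          obtain ⟨_, c, h1, h2⟩ := hh
          have := ih _ _ h2
          have := (hw _ _ _ h1).2
          simp only [wt_cons, List.length_cons]
          nlinarith
      have hc : Pth st S z (e :: B') z := ⟨h0, c, h8, h11⟩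
      have hd1 : 0 < wt w (e :: B') := by
        have := (hw _ _ _ h8).1
        simp only [wt_cons]; omega
      have hd2 : wt w (e :: B') ≤ F.card * M + M + 1 := by
        have := hwB _ _ _ hc
        simp only [List.length_cons] at this
        have : (B'.length + 1) * M ≤ (F.card + 1) * M := Nat.mul_le_mul_right _ (by omega)
        nlinarith
      obtain ⟨L1, k1, p1, q1, r1⟩ := h5.modshort (w := w) F _ hd1 hS
      obtain ⟨L3, k3, p3, q3, r3⟩ := (h6'.append h7).modshort (w := w) F _ hd1 hS
      have hm := Nat.mul_le_mul_left F.card hd2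
      refine ⟨z, L1, e :: B', L3, k1 + k3, p1, hc, p3, by omega, by simp; omega, by omega, ?_⟩
      rw [List.append_assoc, wt_append, r1, r3]
      ring

end weighted

/-! One-counter systems -/

def Fl {σ : Type} (St : Finset σ) (f : ℤ) : Set (σ × ℤ) := {x | x.1 ∈ St ∧ f ≤ x.2}
def Cl {σ : Type} (St : Finset σ) (f h : ℤ) : Set (σ × ℤ) := {x | x.1 ∈ St ∧ f ≤ x.2 ∧ x.2 ≤ h}

structure OkSys {σ E : Type} (stp : σ × ℤ → E → σ × ℤ → Prop) (M : ℕ) : Prop where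
  shift : ∀ a m e b n k, stp (a, m) e (b, n) → stp (a, m + k) e (b, n + k)
  up : ∀ a m e b n, stp (a, m) e (b, n) → n ≤ m + M
  down : ∀ a m e b n, stp (a, m) e (b, n) → m ≤ n + M
  pos : 0 < M

section oneC
variable {σ E : Type} {stp : σ × ℤ → E → σ × ℤ → Prop} {St : Finset σ} {M : ℕ}

theorem OkSys.rev (h : OkSys stp M) : OkSys (fun x e y => stp y e x) M :=
  ⟨fun _ _ _ _ _ k hh => h.shift _ _ _ _ _ k hh, fun _ _ _ _ _ hh => h.down _ _ _ _ _ hh,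
   fun _ _ _ _ _ hh => h.up _ _ _ _ _ hh, h.pos⟩

theorem shiftF (hO : OkSys stp M) {a b : σ} {m n f : ℤ} {l : List E}
    (h : Pth stp (Fl St f) (a, m) l (b, n)) (k : ℤ) {g m' n' : ℤ} (hg : g ≤ f + k)
    (hm : m' = m + k) (hn : n' = n + k) : Pth stp (Fl St g) (a, m') l (b, n') := by
  subst hm hn
  refine Pth.map' (S' := Fl St g) (fun x : σ × ℤ => (x.1, x.2 + k)) (fun x hx => ⟨hx.1, by have := hx.2; simp only; omega⟩)
    (fun x e y _ _ hh => hO.shift _ _ _ _ _ k hh) h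

theorem shiftC (hO : OkSys stp M) {a b : σ} {m n f f' : ℤ} {l : List E}
    (h : Pth stp (Cl St f f') (a, m) l (b, n)) (k : ℤ) {g g' m' n' : ℤ} (hg : g ≤ f + k)
    (hg' : f' + k ≤ g')
    (hm : m' = m + k) (hn : n' = n + k) : Pth stp (Cl St g g') (a, m') l (b, n') := by
  subst hm hn
  refine Pth.map' (S' := Cl St g g') (fun x : σ × ℤ => (x.1, x.2 + k)) (fun x hx => ⟨hx.1, by have := hx.2; simp only; omega⟩)
    (fun x e y _ _ hh => hO.shift _ _ _ _ _ k hh) h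

theorem hill (hO : OkSys stp M) (H H' : ℤ) (hH' : 0 ≤ H')
    (hX : ∀ (a : σ) (i : ℤ) (b : σ) (j : ℤ) (l : List E), 0 ≤ i → i < M → 0 ≤ j → j < M → Pth stp (Cl St 0 H) (a, i) l (b, j) →
      ∃ l', Pth stp (Cl St 0 H') (a, i) l' (b, j)) (b : σ) (j : ℤ) (hj : j < M) :
    ∀ (l : List E) (a : σ) (m : ℤ), Pth stp (Cl St 0 (H + M)) (a, m) l (b, j) →
    (m < M → ∃ l', Pth stp (Cl St 0 (H' + M)) (a, m) l' (b, j)) ∧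
    (M ≤ m → ∃ c i e d k l1 l2, Pth stp (Cl St M (H + M)) (a, m) l1 (c, i) ∧ i < 2 * M ∧
      stp (c, i) e (d, k) ∧ k < M ∧ Pth stp (Cl St 0 (H' + M)) (d, k) l2 (b, j)) := by
  intro l
  induction l with
  | nil =>
    intro a m h
    obtain ⟨h1, h2⟩ := h
    simp only [Prod.mk.injEq] at h1
    obtain ⟨rfl, rfl⟩ := h1
    have h3 := h2.2.1
    simp only at h3
    refine ⟨fun _ => ⟨[], rfl, h2.1, h3, ?_⟩, fun h => ?_⟩
    · simp only; omega
    · omega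
  | cons e l ih =>
    rintro a m ⟨h0, ⟨c, i⟩, h1, h2⟩
    obtain ⟨ih1, ih2⟩ := ih c i h2
    have hu := hO.up _ _ _ _ _ h1
    have hd := hO.down _ _ _ _ _ h1
    have h00 := h0.1
    have h01 := h0.2.1
    have h02 := h0.2.2
    simp only at h00 h01 h02
    constructor
    · intro hm
      have ha : (a, m) ∈ Cl St 0 (H' + M) := ⟨h00, h01, by simp only; omega⟩
      by_cases hi : i < M
      · obtain ⟨l', hl'⟩ := ih1 hi
        exact ⟨e :: l', ha, _, h1, hl'⟩
      · obtain ⟨d, k, e', g, n, l1, l2, p1, p2, p3, p4, p5⟩ := ih2 (by omega)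
        have hk := p1.right.2.1
        simp only at hk
        obtain ⟨l', hl'⟩ := hX c (i - M) d (k - M) l1 (by omega) (by omega) (by omega) (by omega)
          (shiftC hO p1 (-M) (by omega) (by omega) (by omega) (by omega))
        have hl2 : Pth stp (Cl St 0 (H' + M)) (c, i) l' (d, k) :=
          shiftC hO hl' M (by omega) (by omega) (by omega) (by omega)
        exact ⟨e :: (l' ++ e' :: l2), ha, _, h1, hl2.append ⟨hl2.right, _, p3, p5⟩⟩
    · intro hm
      have ha : (a, m) ∈ Cl St M (H + M) := ⟨h00, hm, h02⟩
      by_cases hi : i < M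
      · obtain ⟨l', hl'⟩ := ih1 hi
        exact ⟨a, m, e, c, i, [], l', ⟨rfl, ha⟩, by omega, h1, hi, hl'⟩
      · obtain ⟨d, k, e', g, n, l1, l2, p1, p2, p3, p4, p5⟩ := ih2 (by omega)
        exact ⟨d, k, e', g, n, e :: l1, l2, ⟨ha, _, h1, p1⟩, p2, p3, p4, p5⟩

theorem ceil_exists (hM : 0 < M) {b : σ × ℤ} (l : List E) : ∀ (a : σ × ℤ),
    Pth stp (Fl St 0) a l b → ∃ n : ℕ, Pth stp (Cl St 0 ((n * M : ℕ) : ℤ)) a l b := by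
  have hx : ∀ z : ℤ, ∃ n : ℕ, z ≤ ((n * M : ℕ) : ℤ) := by
    intro z
    refine ⟨z.toNat, ?_⟩
    have : z.toNat * 1 ≤ z.toNat * M := Nat.mul_le_mul_left _ hM
    omega
  induction l with
  | nil =>
    intro a h
    obtain ⟨n, hn⟩ := hx a.2
    exact ⟨n, h.1, h.2.1, h.2.2, hn⟩
  | cons e l ih =>
    intro a h
    obtain ⟨h0, c, h1, h2⟩ := h
    obtain ⟨n, hn⟩ := hx a.2
    obtain ⟨n', hn'⟩ := ih c h2
    have e1 : ((n * M : ℕ) : ℤ) ≤ ((max n n' * M : ℕ) : ℤ) := by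
      exact_mod_cast Nat.mul_le_mul_right _ (le_max_left _ _)
    have e2 : ((n' * M : ℕ) : ℤ) ≤ ((max n n' * M : ℕ) : ℤ) := by
      exact_mod_cast Nat.mul_le_mul_right _ (le_max_right _ _)
    refine ⟨max n n', ⟨h0.1, h0.2, hn.trans e1⟩, c, h1, hn'.mono ?_⟩
    intro x hx
    exact ⟨hx.1, hx.2.1, hx.2.2.trans e2⟩

theorem chain_stab {α : Type} (G : Finset α) (X : ℕ → Finset α) (hG : ∀ n, X n ⊆ G)
    (hm : ∀ n, X n ⊆ X (n + 1)) : ∃ k ≤ G.card, X k = X (k + 1) := by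
  by_contra! hcon
  have : ∀ k, k ≤ G.card + 1 → k ≤ (X k).card := by
    intro k
    induction k with
    | zero => simp
    | succ k ih =>
      intro hk
      have h1 := ih (by omega)
      have h2 := Finset.card_lt_card (Finset.ssubset_iff_subset_ne.mpr ⟨hm k, hcon k (by omega)⟩)
      omega
  have h1 := this (G.card + 1) le_rfl
  have h2 := Finset.card_le_card (hG (G.card + 1))
  omega

def KC (N M : ℕ) : ℕ := N * ((N * M * (N * M)) * M + 1)

theorem claimC (hO : OkSys stp M) {a b : σ} {i j : ℤ} {l : List E} (hi : i < M) (hj : j < M)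
    (h : Pth stp (Fl St 0) (a, i) l (b, j)) :
    ∃ l', Pth stp (Fl St 0) (a, i) l' (b, j) ∧ l'.length ≤ KC St.card M := by
  classical
  set G0 : Finset (σ × ℤ) := St ×ˢ Finset.Ico (0 : ℤ) M with hG0
  set X : ℕ → Finset ((σ × ℤ) × (σ × ℤ)) := fun n =>
    (G0 ×ˢ G0).filter (fun x => ∃ l, Pth stp (Cl St 0 ((n * M : ℕ) : ℤ)) x.1 l x.2) with hX
  have hmem : ∀ (n : ℕ) (a : σ) (i : ℤ) (b : σ) (j : ℤ) (l : List E), i < M → j < M → Pth stp (Cl St 0 ((n * M : ℕ) : ℤ)) (a, i) l (b, j) →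
      ((a, i), (b, j)) ∈ X n := by
    intro n a i b j l hi hj h
    have hl := h.left
    have hr := h.right
    simp only [hX, hG0, Finset.mem_filter, Finset.mem_product, Finset.mem_Ico]
    exact ⟨⟨⟨hl.1, hl.2.1, hi⟩, ⟨hr.1, hr.2.1, hj⟩⟩, l, h⟩
  have hmono : ∀ n, X n ⊆ X (n + 1) := by
    intro n x hx
    simp only [hX, Finset.mem_filter] at hx ⊢
    obtain ⟨h1, l, h2⟩ := hx
    refine ⟨h1, l, h2.mono ?_⟩
    intro y hy
    refine ⟨hy.1, hy.2.1, hy.2.2.trans ?_⟩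
    exact_mod_cast Nat.mul_le_mul_right _ (Nat.le_succ n)
  have hmono' : Monotone X := monotone_nat_of_le_succ hmono
  have hstep : ∀ n k, X n ⊆ X k → X (n + 1) ⊆ X (k + 1) := by
    intro n k hnk x hx
    obtain ⟨⟨a, i⟩, ⟨b, j⟩⟩ := x
    simp only [hX, hG0, Finset.mem_filter, Finset.mem_product, Finset.mem_Ico] at hx
    obtain ⟨⟨⟨h1, h2, h3⟩, ⟨h4, h5, h6⟩⟩, l, h7⟩ := hx
    have e1 : (((n + 1) * M : ℕ) : ℤ) = ((n * M : ℕ) : ℤ) + M := by push_cast; ring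
    have e2 : (((k + 1) * M : ℕ) : ℤ) = ((k * M : ℕ) : ℤ) + M := by push_cast; ring
    rw [e1] at h7
    obtain ⟨l', hl'⟩ := (hill hO ((n * M : ℕ) : ℤ) ((k * M : ℕ) : ℤ) (by positivity) (by
      intro a i b j l p1 p2 p3 p4 p5
      have := hnk (hmem n a i b j l p2 p4 p5)
      simp only [hX, Finset.mem_filter] at this
      exact this.2) b j h6 l a i h7).1 h3
    rw [← e2] at hl'
    exact hmem _ _ _ _ _ _ h3 h6 hl'
  obtain ⟨k, hk, hk'⟩ := chain_stab (G0 ×ˢ G0) X (fun n => Finset.filter_subset _ _) hmono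
  have hall : ∀ n, X n ⊆ X k := by
    intro n
    induction n with
    | zero => exact hmono' (Nat.zero_le k)
    | succ n ih => rw [hk']; exact hstep n k ih
  obtain ⟨n, hn⟩ := ceil_exists hO.pos l _ h
  have h1 := hall n (hmem n a i b j l hi hj hn)
  simp only [hX, Finset.mem_filter] at h1
  obtain ⟨l1, h2⟩ := h1.2
  obtain ⟨l2, -, h3, h4⟩ := h2.shorten (St ×ˢ Finset.Icc (0 : ℤ) ((k * M : ℕ) : ℤ)) (by
    intro x hx
    simp only [Finset.coe_product, Set.mem_prod, Finset.mem_coe, Finset.mem_Icc]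
    exact hx)
  refine ⟨l2, h3.mono (S' := Fl St 0) (fun x hx => ⟨hx.1, hx.2.1⟩), ?_⟩
  have hc : (G0 ×ˢ G0).card = St.card * M * (St.card * M) := by simp [hG0]
  rw [hc] at hk
  have h5 : (St ×ˢ Finset.Icc (0 : ℤ) ((k * M : ℕ) : ℤ)).card = St.card * (k * M + 1) := by
    rw [Finset.card_product, Int.card_Icc]
    congr 1
  rw [h5] at h4
  refine h4.le.trans ?_
  unfold KC
  gcongr

theorem first_drop {f x : ℤ} {b : σ} {n : ℤ} (hn : n < x) : ∀ (l : List E) (a : σ) (m : ℤ), x ≤ m →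
    Pth stp (Fl St f) (a, m) l (b, n) →
    ∃ l1 e l2 c y d z, Pth stp (Fl St x) (a, m) l1 (c, y) ∧ stp (c, y) e (d, z) ∧ z < x ∧
      Pth stp (Fl St f) (d, z) l2 (b, n) := by
  intro l
  induction l with
  | nil =>
    intro a m hm h
    have := h.1
    simp only [Prod.mk.injEq] at this
    omega
  | cons e l ih =>
    rintro a m hm ⟨h0, ⟨c, y⟩, h1, h2⟩
    by_cases hy : y < x
    · exact ⟨[], e, l, a, m, c, y, ⟨rfl, h0.1, hm⟩, h1, hy, h2⟩
    · obtain ⟨l1, e', l2, c', y', d, z, p1, p2, p3, p4⟩ := ih c y (by omega) h2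
      exact ⟨e :: l1, e', l2, c', y', d, z, ⟨⟨h0.1, hm⟩, _, h1, p1⟩, p2, p3, p4⟩

def dstep (stp : σ × ℤ → E → σ × ℤ → Prop) (St : Finset σ) (M K : ℕ) :
    σ → (ℕ × List E) → σ → Prop :=
  fun a L b => 1 ≤ L.1 ∧ L.1 ≤ M ∧ L.2.length ≤ K ∧ Pth stp (Fl St 0) (a, (L.1 : ℤ)) L.2 (b, 0)

theorem chain_exists (hO : OkSys stp M) {b : σ} (m : ℕ) : ∀ (l : List E) (a : σ),
    Pth stp (Fl St 0) (a, (m : ℤ)) l (b, 0) →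
    ∃ c L l', Pth (dstep stp St M (KC St.card M + 1)) ↑St a L c ∧ wt Prod.fst L = m ∧
      Pth stp (Fl St 0) (c, 0) l' (b, 0) := by
  induction m using Nat.strong_induction_on with
  | _ m ih =>
    intro l a h
    by_cases hm : m = 0
    · subst hm
      exact ⟨a, [], l, ⟨rfl, h.left.1⟩, rfl, h⟩
    · obtain ⟨l1, e, l2, c, y, d, z, p1, p2, p3, p4⟩ :=
        first_drop (x := (m : ℤ)) (by omega) l a m le_rfl h
      have hz := p4.left.2
      have hy := p1.right.2
      simp only at hz hy
      have hd := hO.down _ _ _ _ _ p2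
      obtain ⟨l3, q1, q2⟩ := claimC hO (i := 0) (j := y - m) (by have := hO.pos; omega) (by omega)
        (shiftF hO p1 (-m) (by omega) (by omega) (by omega))
      lift z to ℕ using hz
      obtain ⟨c', L, l', r1, r2, r3⟩ := ih z (by omega) l2 d p4
      refine ⟨c', (m - z, l3 ++ [e]) :: L, l', ⟨h.left.1, d, ⟨?_, ?_, ?_, ?_⟩, r1⟩, ?_, r3⟩
      · simp only; omega
      · simp only; omega
      · simp; omega
      · have s1 : Pth stp (Fl St 0) (a, ((m - z : ℕ) : ℤ)) l3 (c, y - z) :=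
          shiftF hO q1 (m - z) (by omega) (by omega) (by omega)
        refine s1.append (Pth.single s1.right ⟨p4.left.1, le_rfl⟩ ?_)
        have := hO.shift _ _ _ _ _ (-z) p2
        simpa [sub_eq_add_neg] using this
      · simp only [wt_cons]; omega

theorem realize (hO : OkSys stp M) {K : ℕ} {b : σ} (L : List (ℕ × List E)) : ∀ (a : σ),
    Pth (dstep stp St M K) ↑St a L b →
    Pth stp (Fl St 0) (a, (wt Prod.fst L : ℤ)) (L.map Prod.snd).flatten (b, 0) ∧
      (L.map Prod.snd).flatten.length ≤ L.length * K := by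
  induction L with
  | nil =>
    intro a h
    refine ⟨⟨by simp [h.1], h.2, ?_⟩, by simp⟩
    simp
  | cons x L ih =>
    rintro a ⟨h0, c, ⟨h1, h2, h3, h4⟩, h5⟩
    obtain ⟨i1, i2⟩ := ih c h5
    have s1 : Pth stp (Fl St 0) (a, (wt Prod.fst (x :: L) : ℤ)) x.2 (c, (wt Prod.fst L : ℤ)) :=
      shiftF hO h4 (wt Prod.fst L) (by omega) (by simp) (by simp)
    refine ⟨by simpa using s1.append i1, ?_⟩
    simp only [List.map_cons, List.flatten_cons, List.length_append, List.length_cons]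
    nlinarith

theorem pump (hO : OkSys stp M) {z : σ} {d : ℕ} {β : List E}
    (h : Pth stp (Fl St 0) (z, (d : ℤ)) β (z, 0)) (r : ℤ) (hr : 0 ≤ r) (e : ℕ) :
    Pth stp (Fl St 0) (z, r + e * d) (List.replicate e β).flatten (z, r) := by
  induction e with
  | zero => exact ⟨by simp, h.left.1, by simpa⟩
  | succ e ih =>
    rw [List.replicate_succ, List.flatten_cons]
    have : (0 : ℤ) ≤ e * d := by positivity
    exact (shiftF hO h (r + e * d) (by omega) (by push_cast; ring) (by ring)).append ih

def KD (N M : ℕ) : ℕ := (N + 1) * (N * M + M + 1) * (KC N M + 1) + KC N M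

/-- A path made of three parts, the middle one being an iterated cycle. -/
def OneCyc {V E τ : Type} (st : V → E → V → Prop) (S : Set V) (pr : V → τ) (C : τ → List E → Prop)
    (K : ℕ) (x y : V) : Prop :=
  ∃ α β γ e z z', Pth st S x α z ∧ Pth st S z (List.replicate e β).flatten z' ∧ Pth st S z' γ y ∧
    α.length ≤ K ∧ β.length ≤ K ∧ γ.length ≤ K ∧ pr z = pr z' ∧ C (pr z) β

def CycP (stp : σ × ℤ → E → σ × ℤ → Prop) (St : Finset σ) (z : σ) (β : List E) : Prop :=
  ∃ m n, Pth stp (Fl St 0) (z, m) β (z, n)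

theorem claimD (hO : OkSys stp M) {a b : σ} {m : ℤ} {l : List E}
    (h : Pth stp (Fl St 0) (a, m) l (b, 0)) :
    OneCyc stp (Fl St 0) Prod.fst (CycP stp St) (KD St.card M) (a, m) (b, 0) := by
  have hm := h.left.2
  simp only at hm
  lift m to ℕ using hm
  obtain ⟨c, L, l', h1, h2, h3⟩ := chain_exists hO m l a h
  have hp := hO.pos
  obtain ⟨l'', h4, h5⟩ := claimC hO (by omega) (by omega) h3
  obtain ⟨z, L1, L2, L3, e, p1, p2, p3, q1, q2, q3, q4⟩ :=
    h1.chrobak (w := Prod.fst) St M subset_rfl (fun x e y hh => ⟨hh.1, hh.2.1⟩)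
  obtain ⟨r1, s1⟩ := realize hO _ _ p1
  obtain ⟨r2, s2⟩ := realize hO _ _ p2
  obtain ⟨r3, s3⟩ := realize hO _ _ p3
  have hmz : (m : ℤ) = wt Prod.fst L1 + e * wt Prod.fst L2 + wt Prod.fst L3 := by
    rw [← h2, q4]; push_cast; ring
  have hnn : (0 : ℤ) ≤ e * wt Prod.fst L2 := by positivity
  have b1 : ∀ n, n ≤ St.card * (St.card * M + M + 1) →
      n * (KC St.card M + 1) ≤ (St.card + 1) * (St.card * M + M + 1) * (KC St.card M + 1) := by
    intro n hn
    apply Nat.mul_le_mul_right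
    nlinarith
  have b2 : L2.length * (KC St.card M + 1) ≤
      (St.card + 1) * (St.card * M + M + 1) * (KC St.card M + 1) := by
    apply Nat.mul_le_mul_right
    nlinarith [Nat.zero_le ((St.card + 1) * (St.card * M + M))]
  have b3 := b1 _ q1
  have b4 := b1 _ q3
  refine ⟨_, _, (L3.map Prod.snd).flatten ++ l'', e, (z, wt Prod.fst L3 + e * wt Prod.fst L2),
    (z, wt Prod.fst L3), shiftF hO r1 (e * wt Prod.fst L2 + wt Prod.fst L3) (by omega) (by omega)
      (by omega), pump hO r2 (wt Prod.fst L3) (by positivity) e, r3.append h4, ?_, ?_, ?_, rfl,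
      ⟨_, _, r2⟩⟩
  · unfold KD; omega
  · unfold KD; omega
  · unfold KD; simp only [List.length_append]; omega

theorem claimD' (hO : OkSys stp M) {a b : σ} {m : ℤ} {l : List E}
    (h : Pth stp (Fl St 0) (b, 0) l (a, m)) :
    OneCyc stp (Fl St 0) Prod.fst (CycP stp St) (KD St.card M) (b, 0) (a, m) := by
  obtain ⟨α, β, γ, e, z, z', h1, h2, h3, k1, k2, k3, hz, ⟨m', n', hc⟩⟩ := claimD hO.rev h.reverse
  refine ⟨γ.reverse, β.reverse, α.reverse, e, z', z, h3.reverse, ?_, h1.reverse, by simpa, by simpa,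
    by simpa, hz.symm, ⟨n', m', hz ▸ hc.reverse⟩⟩
  have := h2.reverse
  rw [List.reverse_flatten, List.map_replicate, List.reverse_replicate] at this
  exact this

theorem OneCyc.shift (hO : OkSys stp M) {K : ℕ} {a b : σ} {m n : ℤ}
    (h : OneCyc stp (Fl St 0) Prod.fst (CycP stp St) K (a, m) (b, n)) (k : ℤ) (hk : 0 ≤ k) :
    OneCyc stp (Fl St 0) Prod.fst (CycP stp St) K (a, m + k) (b, n + k) := by
  obtain ⟨α, β, γ, e, ⟨z, r⟩, ⟨z', r'⟩, h1, h2, h3, k1, k2, k3, hz, hc⟩ := h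
  exact ⟨α, β, γ, e, (z, r + k), (z', r' + k), shiftF hO h1 k (by omega) rfl rfl,
    shiftF hO h2 k (by omega) rfl rfl, shiftF hO h3 k (by omega) rfl rfl, k1, k2, k3, hz, hc⟩

theorem min_split {f : ℤ} {b : σ × ℤ} : ∀ (l : List E) (a : σ × ℤ), Pth stp (Fl St f) a l b →
    ∃ l1 l2 c, f ≤ c.2 ∧ Pth stp (Fl St c.2) a l1 c ∧ Pth stp (Fl St c.2) c l2 b := by
  intro l
  induction l with
  | nil =>
    rintro a ⟨rfl, h⟩
    exact ⟨[], [], a, h.2, ⟨rfl, h.1, le_rfl⟩, ⟨rfl, h.1, le_rfl⟩⟩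
  | cons e l ih =>
    rintro a ⟨h0, d, h1, h2⟩
    obtain ⟨l1, l2, c, p0, p1, p2⟩ := ih d h2
    by_cases hc : c.2 ≤ a.2
    · exact ⟨e :: l1, l2, c, p0, ⟨⟨h0.1, hc⟩, d, h1, p1⟩, p2⟩
    · have hs : Fl St c.2 ⊆ Fl St a.2 := fun x hx => ⟨hx.1, by have := hx.2; omega⟩
      exact ⟨[], e :: (l1 ++ l2), a, h0.2, ⟨rfl, h0.1, le_rfl⟩, ⟨h0.1, le_rfl⟩, d, h1,
        (p1.append p2).mono hs⟩

theorem general1 (hO : OkSys stp M) {a b : σ} {m n : ℤ} {l : List E}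
    (h : Pth stp (Fl St 0) (a, m) l (b, n)) : ∃ y,
    OneCyc stp (Fl St 0) Prod.fst (CycP stp St) (KD St.card M) (a, m) y ∧
    OneCyc stp (Fl St 0) Prod.fst (CycP stp St) (KD St.card M) y (b, n) := by
  obtain ⟨l1, l2, ⟨c, r⟩, p0, p1, p2⟩ := min_split _ _ h
  simp only at p0 p1 p2
  have h1 := (claimD hO (shiftF hO p1 (-r) (g := 0) (by omega) rfl (by omega))).shift hO r p0
  have h2 := (claimD' hO (shiftF hO p2 (-r) (g := 0) (by omega) (by omega) rfl)).shift hO r p0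
  refine ⟨(c, r), ?_, ?_⟩
  · simpa using h1
  · simpa using h2

theorem down1 (hO : OkSys stp M) {a b : σ} {m n : ℤ} {l : List E} (hn : n < M)
    (h : Pth stp (Fl St 0) (a, m) l (b, n)) : ∃ y l',
    OneCyc stp (Fl St 0) Prod.fst (CycP stp St) (KD St.card M) (a, m) y ∧
    Pth stp (Fl St 0) y l' (b, n) ∧ l'.length ≤ KC St.card M := by
  obtain ⟨l1, l2, ⟨c, r⟩, p0, p1, p2⟩ := min_split _ _ h
  simp only at p0 p1 p2
  have h1 := (claimD hO (shiftF hO p1 (-r) (g := 0) (by omega) rfl (by omega))).shift hO r p0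
  have hr := p2.right.2
  simp only at hr
  obtain ⟨l', q1, q2⟩ := claimC hO (by omega) hn (p2.mono (S' := Fl St 0)
    (fun x hx => ⟨hx.1, p0.trans hx.2⟩))
  exact ⟨(c, r), l', by simpa using h1, q1, q2⟩

theorem up1 (hO : OkSys stp M) {a b : σ} {m n : ℤ} {l : List E} (hn : n < M)
    (h : Pth stp (Fl St 0) (b, n) l (a, m)) : ∃ y l',
    Pth stp (Fl St 0) (b, n) l' y ∧ l'.length ≤ KC St.card M ∧
    OneCyc stp (Fl St 0) Prod.fst (CycP stp St) (KD St.card M) y (a, m) := by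
  obtain ⟨l1, l2, ⟨c, r⟩, p0, p1, p2⟩ := min_split _ _ h
  simp only at p0 p1 p2
  have h2 := (claimD' hO (shiftF hO p2 (-r) (g := 0) (by omega) (by omega) rfl)).shift hO r p0
  have hr := p1.left.2
  simp only at hr
  obtain ⟨l', q1, q2⟩ := claimC hO hn (by omega) (p1.mono (S' := Fl St 0)
    (fun x hx => ⟨hx.1, p0.trans hx.2⟩))
  exact ⟨(c, r), l', q1, q2, by simpa using h2⟩

end oneC

/-! Two-dimensional systems and linear path schemes -/

def stT (T : Finset (Trans 2)) : ℕ × Vec 2 → Trans 2 → ℕ × Vec 2 → Prop :=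
  fun x t y => t ∈ T ∧ t.1 = x.1 ∧ t.2.2 = y.1 ∧ y.2 = x.2 + t.2.1

def NS : Set (ℕ × Vec 2) := {x | x.2 ∈ NatSet 2}

theorem disp_cons (t : Trans 2) (l : List (Trans 2)) : disp (t :: l) = t.2.1 + disp l := by
  simp [disp]

theorem disp_nil : disp ([] : List (Trans 2)) = 0 := rfl

theorem run_to_pth {Q : Finset ℕ} {T : Finset (Trans 2)} (hT : ∀ t ∈ T, t.1 ∈ Q ∧ t.2.2 ∈ Q)
    {A : Set (Vec 2)} {q : ℕ} {v : Vec 2} (π : List (Trans 2)) : ∀ (p : ℕ) (u : Vec 2), p ∈ Q →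
    Run T A p u q v π → Pth (stT T) {x | x.1 ∈ Q ∧ x.2 ∈ A} (p, u) π (q, v) := by
  induction π with
  | nil =>
    rintro p u hp ⟨h1, h2, h3, h4, h5⟩
    refine ⟨?_, hp, h3⟩
    rw [disp_nil] at h4
    simp only [IsPathFrom] at h2
    rw [h4, h2, add_zero]
  | cons t l ih =>
    rintro p u hp ⟨h1, h2, h3, h4, h5⟩
    have ht := h1 t (by simp)
    refine ⟨⟨hp, h3⟩, (t.2.2, u + t.2.1), ⟨ht, h2.1, rfl, rfl⟩, ih _ _ (hT t ht).2 ?_⟩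
    refine ⟨fun s hs => h1 s (by simp [hs]), h2.2, ?_, ?_, ?_⟩
    · have := h5 1 le_rfl (by simp)
      simpa [disp_cons, disp_nil] using this
    · rw [h4, disp_cons, add_assoc]
    · intro i hi hi'
      have := h5 (i + 1) (by omega) (by simp; omega)
      rw [List.take_succ_cons, disp_cons] at this
      rwa [add_assoc]

theorem pth_to_run {T : Finset (Trans 2)} {y : ℕ × Vec 2} (π : List (Trans 2)) :
    ∀ (x : ℕ × Vec 2), Pth (stT T) NS x π y → Run T (NatSet 2) x.1 x.2 y.1 y.2 π := by
  induction π with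
  | nil =>
    rintro x ⟨rfl, h⟩
    refine ⟨by simp, rfl, h, by simp [disp_nil], ?_⟩
    intro i hi hi'
    simp at hi'
    omega
  | cons t l ih =>
    rintro x ⟨h0, z, ⟨h1, h2, h3, h4⟩, h5⟩
    obtain ⟨i1, i2, i3, i4, i5⟩ := ih z h5
    refine ⟨?_, ⟨h2, h3 ▸ i2⟩, h0, ?_, ?_⟩
    · intro s hs
      rcases List.mem_cons.mp hs with rfl | hs
      · exact h1
      · exact i1 s hs
    · rw [i4, h4, disp_cons, add_assoc]
    · intro i hi hi'
      obtain ⟨i, rfl⟩ : ∃ k, i = k + 1 := ⟨i - 1, by omega⟩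
      rw [List.take_succ_cons, disp_cons, ← add_assoc, ← h4]
      rcases Nat.eq_zero_or_pos i with rfl | hpos
      · simpa [disp_nil] using i3
      · exact i5 i hpos (by simpa using hi')

theorem IsPathFrom.app {p q r : ℕ} {l l' : List (Trans 2)} (h : IsPathFrom p q l)
    (h' : IsPathFrom q r l') : IsPathFrom p r (l ++ l') := by
  induction l generalizing p with
  | nil => simp only [IsPathFrom] at h; subst h; exact h'
  | cons t l ih => exact ⟨h.1, ih h.2⟩

def catL : List (Trans 2) → List (List (Trans 2) × List (Trans 2)) → LPS 2 → LPS 2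
  | α, [], ρ => (α ++ ρ.1, ρ.2)
  | α, s :: S, ρ => (α, (s.1, (catL s.2 S ρ).1) :: (catL s.2 S ρ).2)

theorem catL_support (ρ : LPS 2) (S : List (List (Trans 2) × List (Trans 2))) :
    ∀ α, lpsSupport (catL α S ρ) = lpsSupport (α, S) ++ lpsSupport ρ := by
  induction S with
  | nil => intro α; simp [catL, lpsSupport]
  | cons s S ih =>
    intro α
    have := ih s.2
    simp only [lpsSupport] at this
    simp [catL, lpsSupport, this]

theorem catL_cycles (ρ : LPS 2) (S : List (List (Trans 2) × List (Trans 2))) :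
    ∀ α, (catL α S ρ).2.map Prod.fst = S.map Prod.fst ++ ρ.2.map Prod.fst := by
  induction S with
  | nil => intro α; simp [catL]
  | cons s S ih => intro α; simp [catL, ih]

theorem catL_word (ρ : LPS 2) (e' : List ℕ) (S : List (List (Trans 2) × List (Trans 2))) :
    ∀ α (e : List ℕ), e.length = S.length →
      lpsWord (catL α S ρ) (e ++ e') = lpsWord (α, S) e ++ lpsWord ρ e' := by
  induction S with
  | nil =>
    intro α e he
    have : e = [] := by simpa using he
    subst this
    simp [catL, lpsWord]
  | cons s S ih =>
    intro α e he
    cases e with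
    | nil => simp at he
    | cons n e =>
      have := ih s.2 e (by simpa using he)
      simp only [lpsWord] at this
      simp [catL, lpsWord, this]

def Sch (T : Finset (Trans 2)) (n K : ℕ) (x y : ℕ × Vec 2) : Prop :=
  ∃ ρ : LPS 2, numCycles ρ ≤ n ∧ lpsLen ρ ≤ K ∧ IsLPSFrom T x.1 y.1 ρ ∧
    ∃ e : List ℕ, e.length = numCycles ρ ∧ Pth (stT T) NS x (lpsWord ρ e) y

theorem Sch.mono {T : Finset (Trans 2)} {n K n' K' : ℕ} {x y : ℕ × Vec 2} (h : Sch T n K x y)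
    (hn : n ≤ n') (hK : K ≤ K') : Sch T n' K' x y := by
  obtain ⟨ρ, h1, h2, h3⟩ := h
  exact ⟨ρ, h1.trans hn, h2.trans hK, h3⟩

theorem Sch.trans {T : Finset (Trans 2)} {n K n' K' : ℕ} {x y z : ℕ × Vec 2} (h : Sch T n K x y)
    (h' : Sch T n' K' y z) : Sch T (n + n') (K + K') x z := by
  obtain ⟨⟨α, S⟩, h1, h2, ⟨h3, h4, h5⟩, e, he, h6⟩ := h
  obtain ⟨ρ, h1', h2', ⟨h3', h4', h5'⟩, e', he', h6'⟩ := h'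
  have hc := catL_cycles ρ S α
  have hl := congrArg List.length hc
  simp only [List.length_map, List.length_append] at hl
  simp only [numCycles] at *
  refine ⟨catL α S ρ, ?_, ?_, ⟨?_, ?_, ?_⟩, e ++ e', ?_, ?_⟩
  · simp only [numCycles]; omega
  · unfold lpsLen at *
    rw [catL_support, List.length_append]
    omega
  · rw [catL_support]
    intro t ht
    rcases List.mem_append.mp ht with ht | ht
    · exact h3 t ht
    · exact h3' t ht
  · rw [catL_support]; exact h4.app h4'
  · intro s hs
    have : s.1 ∈ (catL α S ρ).2.map Prod.fst := List.mem_map_of_mem hs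
    rw [hc] at this
    rcases List.mem_append.mp this with ht | ht
    · obtain ⟨s', hs', he⟩ := List.mem_map.mp ht
      rw [← he]; exact h5 s' hs'
    · obtain ⟨s', hs', he⟩ := List.mem_map.mp ht
      rw [← he]; exact h5' s' hs'
  · simp only [List.length_append, numCycles]; omega
  · rw [catL_word _ _ _ _ _ he]
    exact h6.append h6'

theorem Sch.path {T : Finset (Trans 2)} {x y : ℕ × Vec 2} {l : List (Trans 2)}
    (h : Pth (stT T) NS x l y) : Sch T 0 l.length x y := by
  have hr := pth_to_run _ _ h
  refine ⟨(l, []), by simp [numCycles], by simp [lpsLen, lpsSupport], ⟨?_, ?_, by simp⟩, [],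
    by simp [numCycles], ?_⟩
  · simpa [lpsSupport] using hr.1
  · simpa [lpsSupport] using hr.2.1
  · simpa [lpsWord] using h

theorem Sch.cyc {T : Finset (Trans 2)} {x y : ℕ × Vec 2} {β : List (Trans 2)} {e : ℕ}
    (h : Pth (stT T) NS x (List.replicate e β).flatten y) (hxy : x.1 = y.1)
    (hb : (∀ t ∈ β, t ∈ T) ∧ IsPathFrom x.1 x.1 β) : Sch T 1 β.length x y := by
  by_cases hβ : β = []
  · subst hβ
    have h' : Pth (stT T) NS x [] y := by simpa using h
    exact (Sch.path h').mono (by omega) le_rfl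
  refine ⟨([], [(β, [])]), by simp [numCycles], by simp [lpsLen, lpsSupport], ⟨?_, ?_, ?_⟩, [e],
    by simp [numCycles], ?_⟩
  · simpa [lpsSupport] using hb.1
  · simpa [lpsSupport, ← hxy] using hb.2
  · intro s hs
    simp only [List.mem_singleton] at hs
    subst hs
    exact ⟨hβ, _, hb.2⟩
  · simpa [lpsWord] using h

/-! Strips -/

def Strip (Q : Finset ℕ) (D : ℕ) (i : Fin 2) : Set (ℕ × Vec 2) :=
  {x | x.1 ∈ Q ∧ 0 ≤ x.2 i ∧ x.2 i ≤ D ∧ 0 ≤ x.2 (i + 1)}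

def psi (i : Fin 2) (x : ℕ × Vec 2) : (ℕ × ℤ) × ℤ := ((x.1, x.2 i), x.2 (i + 1))
def phi (i : Fin 2) (y : (ℕ × ℤ) × ℤ) : ℕ × Vec 2 := (y.1.1, fun k => if k = i then y.1.2 else y.2)

theorem phi_psi (i : Fin 2) (x : ℕ × Vec 2) : phi i (psi i x) = x := by
  ext k
  · rfl
  · fin_cases i <;> fin_cases k <;> simp [phi, psi]

def stI (T : Finset (Trans 2)) (i : Fin 2) : (ℕ × ℤ) × ℤ → Trans 2 → (ℕ × ℤ) × ℤ → Prop :=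
  fun x t y => t ∈ T ∧ t.1 = x.1.1 ∧ t.2.2 = y.1.1 ∧ y.1.2 = x.1.2 + t.2.1 i ∧
    y.2 = x.2 + t.2.1 (i + 1)

theorem tnorm_bd {T : Finset (Trans 2)} {t : Trans 2} (ht : t ∈ T) (k : Fin 2) :
    t.2.1 k ≤ tnorm T ∧ - (tnorm T : ℤ) ≤ t.2.1 k := by
  have h1 : vnorm t.2.1 ≤ tnorm T := Finset.le_sup (f := fun t : Trans 2 => vnorm t.2.1) ht
  have h2 : (t.2.1 k).natAbs ≤ vnorm t.2.1 :=
    Finset.le_sup (f := fun k => (t.2.1 k).natAbs) (Finset.mem_univ k)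
  omega

def MM (T : Finset (Trans 2)) (D : ℕ) : ℕ := D + tnorm T + 1

theorem okI (T : Finset (Trans 2)) (D : ℕ) (i : Fin 2) : OkSys (stI T i) (MM T D) := by
  refine ⟨?_, ?_, ?_, by unfold MM; omega⟩
  · rintro a m e b n k ⟨h1, h2, h3, h4, h5⟩
    refine ⟨h1, h2, h3, h4, ?_⟩
    simp only at h5 ⊢
    omega
  · rintro a m e b n ⟨h1, h2, h3, h4, h5⟩
    have := tnorm_bd h1 (i + 1)
    simp only at h5
    unfold MM
    push_cast
    omega
  · rintro a m e b n ⟨h1, h2, h3, h4, h5⟩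
    have := tnorm_bd h1 (i + 1)
    simp only at h5
    unfold MM
    push_cast
    omega

noncomputable def StI (Q : Finset ℕ) (D : ℕ) : Finset (ℕ × ℤ) := Q ×ˢ Finset.Icc (0 : ℤ) D

theorem StI_card (Q : Finset ℕ) (D : ℕ) : (StI Q D).card = Q.card * (D + 1) := by
  simp [StI]

section strip
variable {Q : Finset ℕ} {T : Finset (Trans 2)} {D : ℕ} {i : Fin 2}

theorem to1 {x y : ℕ × Vec 2} {l : List (Trans 2)} (h : Pth (stT T) (Strip Q D i) x l y) :
    Pth (stI T i) (Fl (StI Q D) 0) (psi i x) l (psi i y) := by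
  refine Pth.map' (psi i) ?_ ?_ h
  · rintro x ⟨h1, h2, h3, h4⟩
    refine ⟨?_, h4⟩
    simp [StI, psi, h1, h2, h3]
  · rintro x t y _ _ ⟨h1, h2, h3, h4⟩
    refine ⟨h1, h2, h3, ?_, ?_⟩ <;> simp [psi, h4]

theorem from1 {x y : (ℕ × ℤ) × ℤ} {l : List (Trans 2)}
    (h : Pth (stI T i) (Fl (StI Q D) 0) x l y) : Pth (stT T) NS (phi i x) l (phi i y) := by
  refine Pth.map' (phi i) ?_ ?_ h
  · rintro x ⟨h1, h2⟩ k
    simp only [StI, Finset.mem_product, Finset.mem_Icc] at h1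
    simp only [phi]
    split_ifs
    · exact h1.2.1
    · exact h2
  · rintro x t y _ _ ⟨h1, h2, h3, h4, h5⟩
    refine ⟨h1, h2, h3, ?_⟩
    funext k
    simp only [phi, Pi.add_apply]
    split_ifs with hk
    · rw [hk, h4]
    · have : k = i + 1 := by
        revert hk; fin_cases i <;> fin_cases k <;> simp
      rw [h5, this]

theorem oneCyc_Sch {K : ℕ} {x y : (ℕ × ℤ) × ℤ}
    (h : OneCyc (stI T i) (Fl (StI Q D) 0) Prod.fst (CycP (stI T i) (StI Q D)) K x y) :
    Sch T 1 (3 * K) (phi i x) (phi i y) := by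
  obtain ⟨α, β, γ, e, z, z', h1, h2, h3, k1, k2, k3, hz, m, n, hc⟩ := h
  have r := pth_to_run _ _ (from1 hc)
  have hz' : (phi i z).1 = (phi i z').1 := by simp [phi, hz]
  exact (((Sch.path (from1 h1)).trans (Sch.cyc (from1 h2) hz' ⟨r.1, r.2.1⟩)).trans
    (Sch.path (from1 h3))).mono le_rfl (by omega)

theorem strip_gen {x y : ℕ × Vec 2} {l : List (Trans 2)} (h : Pth (stT T) (Strip Q D i) x l y) :
    Sch T 2 (6 * KD (StI Q D).card (MM T D)) x y := by
  obtain ⟨c, h1, h2⟩ := general1 (okI T D i) (to1 h)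
  have h3 := (oneCyc_Sch h1).trans (oneCyc_Sch h2)
  have h4 := h3.mono le_rfl (show _ ≤ 6 * KD (StI Q D).card (MM T D) by omega)
  have e1 := phi_psi i x
  have e2 := phi_psi i y
  simp only [psi] at e1 e2
  rwa [e1, e2] at h4

theorem strip_down {x y : ℕ × Vec 2} {l : List (Trans 2)} (h : Pth (stT T) (Strip Q D i) x l y)
    (hy : y.2 (i + 1) < MM T D) :
    Sch T 1 (3 * KD (StI Q D).card (MM T D) + KC (StI Q D).card (MM T D)) x y := by
  obtain ⟨c, l', h1, h2, h3⟩ := down1 (okI T D i) hy (to1 h)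
  have h4 := ((oneCyc_Sch h1).trans (Sch.path (from1 h2))).mono le_rfl
    (Nat.add_le_add_left h3 _)
  have e1 := phi_psi i x
  have e2 := phi_psi i y
  simp only [psi] at e1 e2
  rwa [e1, e2] at h4

theorem strip_up {x y : ℕ × Vec 2} {l : List (Trans 2)} (h : Pth (stT T) (Strip Q D i) x l y)
    (hx : x.2 (i + 1) < MM T D) :
    Sch T 1 (KC (StI Q D).card (MM T D) + 3 * KD (StI Q D).card (MM T D)) x y := by
  obtain ⟨c, l', h2, h3, h1⟩ := up1 (okI T D i) hx (to1 h)
  have h4 := ((Sch.path (from1 h2)).trans (oneCyc_Sch h1)).mono (n' := 1) (by omega)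
    (Nat.add_le_add_right h3 _)
  have e1 := phi_psi i x
  have e2 := phi_psi i y
  simp only [psi] at e1 e2
  rwa [e1, e2] at h4

theorem strip_box {x y : ℕ × Vec 2} {l : List (Trans 2)} (h : Pth (stT T) (Strip Q D i) x l y)
    (hx : x.2 (i + 1) < MM T D) (hy : y.2 (i + 1) < MM T D) :
    ∃ l', Pth (stT T) NS x l' y ∧ l'.length ≤ KC (StI Q D).card (MM T D) + 1 := by
  obtain ⟨l', h1, h2⟩ := claimC (okI T D i) hx hy (to1 h)
  refine ⟨l', ?_, by omega⟩
  have e1 := phi_psi i x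
  have e2 := phi_psi i y
  have := from1 h1
  simp only [psi] at e1 e2
  rwa [e1, e2] at this

def LL (Q : Finset ℕ) (D : ℕ) : Set (ℕ × Vec 2) := {x | x.1 ∈ Q ∧ x.2 ∈ LBand D}

def Box (Q : Finset ℕ) (T : Finset (Trans 2)) (D : ℕ) : Set (ℕ × Vec 2) :=
  {x | x ∈ LL Q D ∧ ∀ k, x.2 k < MM T D}

theorem LL_strip {x : ℕ × Vec 2} (hx : x ∈ LL Q D) (i : Fin 2) (h : (D : ℤ) < x.2 (i + 1)) :
    x ∈ Strip Q D i := by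
  obtain ⟨h1, h2, h3⟩ := hx
  refine ⟨h1, h2 _, ?_, h2 _⟩
  fin_cases i
  · rcases h3 with h3 | h3
    · exact h3
    · simp at h; omega
  · rcases h3 with h3 | h3
    · simp at h; omega
    · exact h3

theorem LL_strip' {x : ℕ × Vec 2} (hx : x ∈ LL Q D) : ∃ i, x ∈ Strip Q D i := by
  obtain ⟨h1, h2, h3⟩ := hx
  rcases h3 with h3 | h3
  · exact ⟨0, h1, h2 _, h3, h2 _⟩
  · exact ⟨1, h1, h2 _, h3, h2 _⟩

theorem LL_tri {x : ℕ × Vec 2} (hx : x ∈ LL Q D) :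
    x ∈ Box Q T D ∨ ∃ i : Fin 2, (MM T D : ℤ) ≤ x.2 (i + 1) := by
  by_cases h : ∀ k, x.2 k < MM T D
  · exact Or.inl ⟨hx, h⟩
  · push Not at h
    obtain ⟨k, hk⟩ := h
    refine Or.inr ⟨k + 1, ?_⟩
    have : k + 1 + 1 = k := by fin_cases k <;> rfl
    rwa [this]

theorem strip_unique {x : ℕ × Vec 2} {i j : Fin 2} (h : (MM T D : ℤ) ≤ x.2 (i + 1))
    (hx : x ∈ Strip Q D j) : j = i := by
  by_contra hne
  have : j = i + 1 := by
    revert hne; fin_cases i <;> fin_cases j <;> simp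
  subst this
  have := hx.2.2.1
  unfold MM at h
  push_cast at h
  omega

def bstep (Q : Finset ℕ) (T : Finset (Trans 2)) (D : ℕ) :
    ℕ × Vec 2 → List (Trans 2) → ℕ × Vec 2 → Prop :=
  fun x l y => Pth (stT T) NS x l y ∧ l.length ≤ KC (StI Q D).card (MM T D) + 1

theorem LL_NS {x : ℕ × Vec 2} (hx : x ∈ LL Q D) : x ∈ NS := hx.2.1

theorem decomp {y : ℕ × Vec 2} (l : List (Trans 2)) : ∀ x, Pth (stT T) (LL Q D) x l y →
    (∃ i l', Pth (stT T) (Strip Q D i) x l' y) ∨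
    (∃ i l1 b b' L j l2, Pth (stT T) (Strip Q D i) x l1 b ∧
      Pth (bstep Q T D) (Box Q T D) b L b' ∧ Pth (stT T) (Strip Q D j) b' l2 y) := by
  induction l with
  | nil =>
    rintro x ⟨rfl, h⟩
    obtain ⟨i, hi⟩ := LL_strip' h
    exact Or.inl ⟨i, [], rfl, hi⟩
  | cons t l ih =>
    rintro x ⟨h0, x', h1, h2⟩
    have h0' := h2.left
    have hb : ∀ k, x'.2 k = x.2 k + t.2.1 k := by intro k; rw [h1.2.2.2]; rfl
    have hnear : ∀ i : Fin 2, ((MM T D : ℤ) ≤ x.2 (i + 1) ∨ (MM T D : ℤ) ≤ x'.2 (i + 1)) →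
        x ∈ Strip Q D i ∧ x' ∈ Strip Q D i := by
      intro i hi
      have e1 := hb (i + 1)
      have e2 := tnorm_bd h1.1 (i + 1)
      unfold MM at hi
      push_cast at hi
      constructor
      · exact LL_strip h0 i (by omega)
      · exact LL_strip h0' i (by omega)
    have ext : ∀ i, x ∈ Strip Q D i → x' ∈ Strip Q D i →
        ((∃ l', Pth (stT T) (Strip Q D i) x' l' y) ∨ (∃ l1 b b' L j l2,
          Pth (stT T) (Strip Q D i) x' l1 b ∧
          Pth (bstep Q T D) (Box Q T D) b L b' ∧ Pth (stT T) (Strip Q D j) b' l2 y)) →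
        (∃ i l', Pth (stT T) (Strip Q D i) x l' y) ∨
        (∃ i l1 b b' L j l2, Pth (stT T) (Strip Q D i) x l1 b ∧
          Pth (bstep Q T D) (Box Q T D) b L b' ∧ Pth (stT T) (Strip Q D j) b' l2 y) := by
      intro i hx hx' hh
      rcases hh with ⟨l', hl'⟩ | ⟨l1, b, b', L, j, l2, p1, p2, p3⟩
      · exact Or.inl ⟨i, t :: l', hx, x', h1, hl'⟩
      · exact Or.inr ⟨i, t :: l1, b, b', L, j, l2, ⟨hx, x', h1, p1⟩, p2, p3⟩
    rcases LL_tri (T := T) h0' with hB' | ⟨i, hi⟩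
    · -- x' in the box
      have ih' : ∃ L b' j l2, Pth (bstep Q T D) (Box Q T D) x' L b' ∧
          Pth (stT T) (Strip Q D j) b' l2 y := by
        rcases ih x' h2 with ⟨i, l', hl'⟩ | ⟨i, l1, b, b', L, j, l2, p1, p2, p3⟩
        · exact ⟨[], x', i, l', ⟨rfl, hB'⟩, hl'⟩
        · obtain ⟨l3, q1, q2⟩ := strip_box p1 (hB'.2 _) (p2.left.2 _)
          exact ⟨l3 :: L, b', j, l2, ⟨hB', b, ⟨q1, q2⟩, p2⟩, p3⟩
      obtain ⟨L, b', j, l2, p2, p3⟩ := ih'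
      rcases LL_tri (T := T) h0 with hB | ⟨i, hi⟩
      · obtain ⟨i, hi⟩ := LL_strip' h0
        refine Or.inr ⟨i, [], x, b', [t] :: L, j, l2, ⟨rfl, hi⟩, ⟨hB, x', ⟨?_, by simp⟩, p2⟩, p3⟩
        exact Pth.single (LL_NS h0) (LL_NS h0') h1
      · obtain ⟨s1, s2⟩ := hnear i (Or.inl hi)
        exact ext i s1 s2 (Or.inr ⟨[], x', b', L, j, l2, ⟨rfl, s2⟩, p2, p3⟩)
    · obtain ⟨s1, s2⟩ := hnear i (Or.inr hi)
      rcases ih x' h2 with ⟨i', l', hl'⟩ | ⟨i', l1, b, b', L, j, l2, p1, p2, p3⟩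
      · obtain rfl := strip_unique hi hl'.left
        exact ext i' s1 s2 (Or.inl ⟨l', hl'⟩)
      · obtain rfl := strip_unique hi p1.left
        exact ext i' s1 s2 (Or.inr ⟨l1, b, b', L, j, l2, p1, p2, p3⟩)

theorem box_flat {b' : ℕ × Vec 2} (L : List (List (Trans 2))) : ∀ b,
    Pth (bstep Q T D) (Box Q T D) b L b' →
    ∃ l, Pth (stT T) NS b l b' ∧ l.length ≤ L.length * (KC (StI Q D).card (MM T D) + 1) := by
  induction L with
  | nil =>
    rintro b ⟨rfl, h⟩
    exact ⟨[], ⟨rfl, LL_NS h.1⟩, by simp⟩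
  | cons s L ih =>
    rintro b ⟨h0, c, ⟨h1, h2⟩, h3⟩
    obtain ⟨l, h4, h5⟩ := ih c h3
    refine ⟨s ++ l, h1.append h4, ?_⟩
    simp only [List.length_append, List.length_cons]
    nlinarith

theorem box_short {b b' : ℕ × Vec 2} {L : List (List (Trans 2))}
    (h : Pth (bstep Q T D) (Box Q T D) b L b') :
    Sch T 0 (Q.card * MM T D ^ 2 * (KC (StI Q D).card (MM T D) + 1)) b b' := by
  obtain ⟨L', -, h1, h2⟩ := h.shorten
    (Q ×ˢ Fintype.piFinset (fun _ : Fin 2 => Finset.Ico (0 : ℤ) (MM T D))) (by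
    rintro x ⟨⟨h1, h2, h3⟩, h4⟩
    simp only [Finset.coe_product, Set.mem_prod, Finset.mem_coe, Fintype.mem_piFinset,
      Finset.mem_Ico]
    exact ⟨h1, fun k => ⟨h2 k, h4 k⟩⟩)
  obtain ⟨l, h3, h4⟩ := box_flat L' b h1
  refine (Sch.path h3).mono le_rfl (h4.trans (Nat.mul_le_mul_right _ ?_))
  rw [Finset.card_product, Fintype.card_piFinset] at h2
  simp at h2
  have : MM T D ^ 2 = MM T D * MM T D := sq _
  simp [this] at *
  omega

theorem all_Sch {x y : ℕ × Vec 2} {l : List (Trans 2)} (h : Pth (stT T) (LL Q D) x l y) :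
    Sch T 2 (6 * KD (StI Q D).card (MM T D) + 2 * KC (StI Q D).card (MM T D) +
      Q.card * MM T D ^ 2 * (KC (StI Q D).card (MM T D) + 1)) x y := by
  rcases decomp l x h with ⟨i, l', hl'⟩ | ⟨i, l1, b, b', L, j, l2, p1, p2, p3⟩
  · exact (strip_gen hl').mono le_rfl (by omega)
  · exact (((strip_down p1 (p2.left.2 _)).trans (box_short p2)).trans
      (strip_up p3 (p2.right.2 _))).mono le_rfl (by omega)

end strip

theorem KC_bd {X N M : ℕ} (hX : 2 ≤ X) (hN : N ≤ X ^ 2) (hM : M ≤ X) : KC N M ≤ X ^ 10 := by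
  have h1 : KC N M ≤ X ^ 2 * ((X ^ 2 * X * (X ^ 2 * X)) * X + 1) := by
    unfold KC; gcongr
  have h2 : 1 ≤ X ^ 7 := Nat.one_le_pow _ _ (by omega)
  calc KC N M ≤ X ^ 2 * ((X ^ 2 * X * (X ^ 2 * X)) * X + 1) := h1
    _ ≤ X ^ 2 * (2 * X ^ 7) := by
        apply Nat.mul_le_mul_left
        have : X ^ 2 * X * (X ^ 2 * X) * X = X ^ 7 := by ring
        omega
    _ ≤ X ^ 2 * (X * X ^ 7) := by gcongr
    _ = X ^ 10 := by ring

theorem dbl {X : ℕ} (hX : 2 ≤ X) (n k : ℕ) (hk : k = n + 1) : 2 * X ^ n ≤ X ^ k := by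
  rw [hk, pow_succ, mul_comm]; exact Nat.mul_le_mul_left _ hX

theorem KD_bd {X N M : ℕ} (hX : 2 ≤ X) (hN : N ≤ X ^ 2) (hM : M ≤ X) : KD N M ≤ X ^ 20 := by
  have h1 := KC_bd hX hN hM
  have p : ∀ n, 1 ≤ X ^ n := fun n => Nat.one_le_pow _ _ (by omega)
  have a1 : N + 1 ≤ X ^ 3 := by have := dbl hX 2 3 rfl; have := p 2; omega
  have a2 : N * M + M + 1 ≤ X ^ 5 := by
    have e1 : N * M ≤ X ^ 2 * X := Nat.mul_le_mul hN hM
    have e2 : X ^ 2 * X = X ^ 3 := by ring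
    have e3 := dbl hX 3 4 rfl
    have e4 := dbl hX 4 5 rfl
    have e5 : X ≤ X ^ 3 := Nat.le_self_pow (by norm_num) _
    have e6 := p 3
    omega
  have a3 : KC N M + 1 ≤ X ^ 11 := by have := dbl hX 10 11 rfl; have := p 10; omega
  have a4 : (N + 1) * (N * M + M + 1) * (KC N M + 1) ≤ X ^ 3 * X ^ 5 * X ^ 11 := by gcongr
  have a5 : X ^ 3 * X ^ 5 * X ^ 11 = X ^ 19 := by ring
  have a6 := dbl hX 19 20 rfl
  have a7 : X ^ 10 ≤ X ^ 19 := Nat.pow_le_pow_right (by omega) (by norm_num)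
  unfold KD
  omega

theorem tot_bd (Q : Finset ℕ) (T : Finset (Trans 2)) (D : ℕ) :
    6 * KD (StI Q D).card (MM T D) + 2 * KC (StI Q D).card (MM T D) +
      Q.card * MM T D ^ 2 * (KC (StI Q D).card (MM T D) + 1) ≤
      (Q.card + tnorm T + D + 2) ^ 24 := by
  set X := Q.card + tnorm T + D + 2 with hX
  have hX2 : 2 ≤ X := by omega
  have hN : (StI Q D).card ≤ X ^ 2 := by
    rw [StI_card, sq]
    exact Nat.mul_le_mul (by omega) (by omega)
  have hM : MM T D ≤ X := by unfold MM; omega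
  have hQ : Q.card ≤ X := by omega
  clear_value X
  have h1 := KC_bd hX2 hN hM
  have h2 := KD_bd hX2 hN hM
  have p := Nat.one_le_pow 10 X (by omega)
  have a3 : KC (StI Q D).card (MM T D) + 1 ≤ X ^ 11 := by have := dbl hX2 10 11 rfl; omega
  have a4 : Q.card * MM T D ^ 2 * (KC (StI Q D).card (MM T D) + 1) ≤ X * X ^ 2 * X ^ 11 := by
    gcongr
  have a5 : X * X ^ 2 * X ^ 11 = X ^ 14 := by ring
  have a6 : X ^ 14 ≤ X ^ 20 := Nat.pow_le_pow_right (by omega) (by norm_num)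
  have a7 : X ^ 10 ≤ X ^ 20 := Nat.pow_le_pow_right (by omega) (by norm_num)
  have b1 := dbl hX2 20 21 rfl
  have b2 := dbl hX2 21 22 rfl
  have b3 := dbl hX2 22 23 rfl
  have b4 := dbl hX2 23 24 rfl
  omega

theorem fin_lists {α : Type} (T : Finset α) (n : ℕ) :
    {l : List α | l.length ≤ n ∧ ∀ t ∈ l, t ∈ T}.Finite := by
  have h := (List.finite_length_le T n).image (List.map Subtype.val)
  refine h.subset ?_
  rintro l ⟨h1, h2⟩
  refine ⟨l.attach.map (fun t => ⟨t.1, h2 t.1 t.2⟩), by simpa using h1, ?_⟩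
  simp [List.map_map, Function.comp_def]

theorem fin_lps (T : Finset (Trans 2)) (K : ℕ) :
    {ρ : LPS 2 | (∃ p q, IsLPSFrom T p q ρ) ∧ lpsLen ρ ≤ K ∧ numCycles ρ ≤ 2}.Finite := by
  have h1 := fin_lists T K
  have h2 := fin_lists (h1.toFinset ×ˢ h1.toFinset) 2
  refine (h1.prod h2).subset ?_
  rintro ⟨α, S⟩ ⟨⟨p, q, h3, -, -⟩, h4, h5⟩
  simp only [lpsLen, lpsSupport, List.length_append] at h4
  simp only [lpsSupport] at h3
  refine ⟨⟨by simp only; omega, fun t ht => h3 t (by simp [ht])⟩, h5, ?_⟩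
  rintro ⟨β, γ⟩ hs
  have hsl : (β ++ γ).Sublist (S.map fun s => s.1 ++ s.2).flatten :=
    List.sublist_flatten_of_mem (List.mem_map_of_mem (f := fun s => s.1 ++ s.2) hs)
  have hl := hsl.length_le
  rw [List.length_append] at hl
  simp only [Finset.mem_product, Set.Finite.mem_toFinset, Set.mem_ofPred_eq]
  refine ⟨⟨by omega, fun t ht => h3 t ?_⟩, ⟨by omega, fun t ht => h3 t ?_⟩⟩
  · exact List.mem_append_right _ (hsl.subset (by simp [ht]))
  · exact List.mem_append_right _ (hsl.subset (by simp [ht]))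

/-- Proposition on L-shaped bands. Runs of a 2-VASS staying in
the L-shaped band `L` are captured by a finite set of linear path schemes of
polynomial length with at most two cycles. -/
theorem statement8 :
    ∃ c : ℕ, ∀ (Q : Finset ℕ) (T : Finset (Trans 2)),
      (∀ t ∈ T, t.1 ∈ Q ∧ t.2.2 ∈ Q) →
      ∀ D : ℕ,
      ∃ Y : Finset (LPS 2),
        (∀ ρ ∈ Y, ∃ p q, IsLPSFrom T p q ρ) ∧
        (∀ p ∈ Q, ∀ q ∈ Q, ∀ u v : Vec 2, u ∈ LBand D → v ∈ LBand D →
          Reach T (LBand D) p u q v → SReach T Y (NatSet 2) p u q v) ∧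
        (∀ ρ ∈ Y, lpsLen ρ ≤ (Q.card + tnorm T + D + 2) ^ c) ∧
        (∀ ρ ∈ Y, numCycles ρ ≤ 2) := by
  refine ⟨24, ?_⟩
  intro Q T hT D
  have hf := fin_lps T ((Q.card + tnorm T + D + 2) ^ 24)
  refine ⟨hf.toFinset, ?_, ?_, ?_, ?_⟩
  · intro ρ hρ
    exact ((Set.Finite.mem_toFinset hf).mp hρ).1
  · rintro p hp q hq u v hu hv ⟨π, hπ⟩
    have h1 : Pth (stT T) (LL Q D) (p, u) π (q, v) := run_to_pth hT π p u hp hπ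
    obtain ⟨ρ, h2, h3, h4, e, h5, h6⟩ := (all_Sch h1).mono le_rfl (tot_bd Q T D)
    refine ⟨ρ, (Set.Finite.mem_toFinset hf).mpr ⟨⟨p, q, h4⟩, h3, h2⟩, lpsWord ρ e, ⟨e, h5, rfl⟩, ?_⟩
    exact pth_to_run _ _ h6
  · intro ρ hρ
    exact ((Set.Finite.mem_toFinset hf).mp hρ).2.1
  · intro ρ hρ
    exact ((Set.Finite.mem_toFinset hf).mp hρ).2.2

end VASS
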